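/- Suppose: (i) the model is data uniformly relevant (DUR): there exist d, k > 0 such that for all |θ| > k, |∫_ℝ x·π(x | θ) dx| ≤ |θ| − d; (ii) the non-centred parametrisation is geometrically tight in parameter (GTIP): there exist a, b > 0 such that for every θ ∈ ℝ and every t ≥ 0, ∫_{{x : |x − θ| > t}} π(x | θ) dx ≤ a·e^{−b·t}. Then there exists α₀ > 0 such that for every α ∈ (0, α₀): for all θ > k, ∫_ℝ e^{α x} π(x | θ) dx ≤ e^{α θ}(1 − α d/2), and for all θ < −k, ∫_ℝ e^{−α x} π(x | θ) dx ≤ e^{−α θ}(1 − α d/2). -/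

import Mathlib

open MeasureTheory Filter Set

noncomputable section

/-- Joint (unnormalised posterior) density `f_θ(x) = f₁(y - x) · f₂(x - θ)`. -/
def fjoint (f₁ f₂ : ℝ → ℝ) (y θ x : ℝ) : ℝ := f₁ (y - x) * f₂ (x - θ)

/-- Normalising constant `c_θ = ∫ f_θ(x) dx`. -/
def cnorm (f₁ f₂ : ℝ → ℝ) (y θ : ℝ) : ℝ := ∫ x, fjoint f₁ f₂ y θ x

/-- Conditional posterior density `π(x | θ) = f_θ(x)/c_θ`. -/
def post (f₁ f₂ : ℝ → ℝ) (y θ x : ℝ) : ℝ := fjoint f₁ f₂ y θ x / cnorm f₁ f₂ y θ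

/-- One-step transition density of the marginal Θ-chain of the centred Gibbs sampler:
`p(θ₀, θ₁) = (1/c_{θ₀}) ∫ f₂(x - θ₁) f_{θ₀}(x) dx`. -/
def gibbsTrans (f₁ f₂ : ℝ → ℝ) (y θ₀ θ₁ : ℝ) : ℝ :=
  (1 / cnorm f₁ f₂ y θ₀) * ∫ x, f₂ (x - θ₁) * fjoint f₁ f₂ y θ₀ x

/-- `n`-step transition density (for `n ≥ 1`; the value at `n = 0` is unused). -/
def gibbsTransN (f₁ f₂ : ℝ → ℝ) (y : ℝ) : ℕ → ℝ → ℝ → ℝ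
  | 0, _, _ => 0
  | 1, θ₀, θ₁ => gibbsTrans f₁ f₂ y θ₀ θ₁
  | (n + 2), θ₀, θ₁ => ∫ u, gibbsTransN f₁ f₂ y (n + 1) θ₀ u * gibbsTrans f₁ f₂ y u θ₁

/-!
Taylor expansion of the exponential around `θ` gives
`E[exp (s (X - θ))] ≤ 1 + s E[X - θ] + (s / c)² E[exp (c |X - θ|) - 1]` for `|s| ≤ c`.
Geometric tightness makes the last expectation bounded uniformly in `θ` for `c = b / 2`, by the
layer-cake formula, while uniform relevance makes `s E[X - θ] ≤ -|s| d` when `s` has the sign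
of `θ`. Hence the quadratic term is absorbed by half of the linear one for small `|s|`.
-/

open Real ProbabilityTheory
open scoped Nat

-- Termwise comparison of the exponential series: `|r| ^ n ≤ r ^ 2` for `n ≥ 2`.
lemma exp_mul_sub_one_sub_le {r : ℝ} (hr : |r| ≤ 1) (x : ℝ) :
    exp (r * x) - 1 - r * x ≤ r ^ 2 * (exp |x| - 1 - |x|) := by
  have hasSum_tail (z : ℝ) : HasSum (fun n : ℕ ↦ z ^ (n + 2) / (n + 2)!) (exp z - 1 - z) := by
    have hexp : HasSum (fun n : ℕ ↦ z ^ n / n !) (exp z) := by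
      rw [exp_eq_exp_ℝ]
      exact NormedSpace.expSeries_div_hasSum_exp z
    simpa [Finset.sum_range_succ, sub_sub] using (hasSum_nat_add_iff' 2).mpr hexp
  refine hasSum_le (fun n ↦ ?_) (hasSum_tail (r * x)) ((hasSum_tail |x|).mul_left (r ^ 2))
  rw [← mul_div_assoc]
  gcongr
  calc (r * x) ^ (n + 2) ≤ |(r * x) ^ (n + 2)| := le_abs_self _
    _ = |r| ^ n * (r ^ 2 * |x| ^ (n + 2)) := by
        rw [abs_pow, abs_mul, mul_pow, pow_add |r|, sq_abs, mul_assoc]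
    _ ≤ 1 * (r ^ 2 * |x| ^ (n + 2)) := by
        gcongr
        exact pow_le_one₀ (abs_nonneg r) hr
    _ = r ^ 2 * |x| ^ (n + 2) := one_mul _

lemma intervalIntegral_const_mul_exp_mul (c r : ℝ) :
    ∫ t in (0 : ℝ)..r, c * exp (c * t) = exp (c * r) - 1 := by
  rw [intervalIntegral.integral_const_mul, intervalIntegral.mul_integral_comp_mul_left,
    integral_exp, mul_zero, exp_zero]

lemma lintegral_Ioi_const_mul_exp_neg_mul {A r : ℝ} (hA : 0 ≤ A) (hr : 0 < r) :
    ∫⁻ t in Ioi (0 : ℝ), ENNReal.ofReal (A * exp (-r * t)) = ENNReal.ofReal (A / r) := by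
  rw [← ofReal_integral_eq_lintegral_ofReal
      ((integrableOn_exp_mul_Ioi (neg_neg_of_pos hr) 0).const_mul A)
      (ae_of_all _ fun t ↦ by positivity),
    integral_const_mul, integral_exp_mul_Ioi (neg_neg_of_pos hr)]
  simp [div_eq_mul_inv]

/-- `U` has a geometric tail with constants `a` and `b` under `P`. The GTIP condition asks that
`x ↦ x - θ` have such a tail under `π(· | θ)`, with constants not depending on `θ`. -/
def HasGeometricTail {Ω : Type*} [MeasurableSpace Ω] (P : Measure Ω) (U : Ω → ℝ) (a b : ℝ) :
    Prop :=
  ∀ t, 0 ≤ t → P {ω | t < |U ω|} ≤ ENNReal.ofReal (a * exp (-b * t))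

section GeometricTail

variable {Ω : Type*} {mΩ : MeasurableSpace Ω} {P : Measure Ω} {U : Ω → ℝ} {a b c s : ℝ}

lemma exp_mul_abs_sub_one_nonneg (hc : 0 ≤ c) (u : ℝ) : 0 ≤ exp (c * |u|) - 1 :=
  sub_nonneg.mpr (one_le_exp (mul_nonneg hc (abs_nonneg u)))

lemma HasGeometricTail.lintegral_exp_mul_abs_sub_one_le (htail : HasGeometricTail P U a b)
    (hU : AEMeasurable U P) (ha : 0 ≤ a) (hc : 0 ≤ c) (hcb : c < b) :
    ∫⁻ ω, ENNReal.ofReal (exp (c * |U ω|) - 1) ∂P ≤ ENNReal.ofReal (a * c / (b - c)) := by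
  have layercake := lintegral_comp_eq_lintegral_meas_lt_mul P (f := fun ω ↦ |U ω|)
    (g := fun t ↦ c * exp (c * t)) (ae_of_all _ fun ω ↦ abs_nonneg _) hU.abs
    (fun t _ ↦ Continuous.intervalIntegrable (by fun_prop) _ _)
    (ae_of_all _ fun t ↦ by positivity)
  simp only [intervalIntegral_const_mul_exp_mul] at layercake
  rw [layercake, ← lintegral_Ioi_const_mul_exp_neg_mul (mul_nonneg ha hc) (sub_pos.mpr hcb)]
  refine setLIntegral_mono' measurableSet_Ioi fun t ht ↦ ?_
  calc P {ω | t < |U ω|} * ENNReal.ofReal (c * exp (c * t))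
      ≤ ENNReal.ofReal (a * exp (-b * t)) * ENNReal.ofReal (c * exp (c * t)) := by
        gcongr
        exact htail t (le_of_lt ht)
    _ = ENNReal.ofReal (a * c * exp (-(b - c) * t)) := by
        rw [← ENNReal.ofReal_mul (by positivity), mul_mul_mul_comm, ← exp_add]
        ring_nf

lemma HasGeometricTail.integrable_exp_mul_abs_sub_one (htail : HasGeometricTail P U a b)
    (hU : AEMeasurable U P) (ha : 0 ≤ a) (hc : 0 ≤ c) (hcb : c < b) :
    Integrable (fun ω ↦ exp (c * |U ω|) - 1) P := by
  refine ⟨by fun_prop, (hasFiniteIntegral_iff_ofReal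
    (ae_of_all _ fun ω ↦ exp_mul_abs_sub_one_nonneg hc (U ω))).mpr ?_⟩
  exact (htail.lintegral_exp_mul_abs_sub_one_le hU ha hc hcb).trans_lt ENNReal.ofReal_lt_top

lemma HasGeometricTail.integral_exp_mul_abs_sub_one_le (htail : HasGeometricTail P U a b)
    (hU : AEMeasurable U P) (ha : 0 ≤ a) (hc : 0 ≤ c) (hcb : c < b) :
    ∫ ω, (exp (c * |U ω|) - 1) ∂P ≤ a * c / (b - c) := by
  rw [integral_eq_lintegral_of_nonneg_ae
    (ae_of_all _ fun ω ↦ exp_mul_abs_sub_one_nonneg hc (U ω)) (by fun_prop)]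
  exact ENNReal.toReal_le_of_le_ofReal (div_nonneg (mul_nonneg ha hc) (sub_pos.mpr hcb).le)
    (htail.lintegral_exp_mul_abs_sub_one_le hU ha hc hcb)

lemma integrable_of_integrable_exp_mul_abs_sub_one (hU : AEMeasurable U P) (hc : 0 < c)
    (hint : Integrable (fun ω ↦ exp (c * |U ω|) - 1) P) : Integrable U P := by
  refine (hint.const_mul c⁻¹).mono' hU.aestronglyMeasurable (ae_of_all _ fun ω ↦ ?_)
  rw [norm_eq_abs, le_inv_mul_iff₀ hc]
  exact le_sub_iff_add_le.mpr (add_one_le_exp _)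

lemma HasGeometricTail.integrable (htail : HasGeometricTail P U a b) (hU : AEMeasurable U P)
    (ha : 0 ≤ a) (hb : 0 < b) : Integrable U P :=
  integrable_of_integrable_exp_mul_abs_sub_one hU (half_pos hb)
    (htail.integrable_exp_mul_abs_sub_one hU ha (half_pos hb).le (half_lt_self hb))

lemma mgf_le_one_add_mul_integral_add [IsProbabilityMeasure P] (hU : AEMeasurable U P)
    (hc : 0 < c) (hs : |s| ≤ c) (hint : Integrable (fun ω ↦ exp (c * |U ω|) - 1) P) :
    mgf U P s ≤ 1 + s * ∫ ω, U ω ∂P + (s / c) ^ 2 * ∫ ω, (exp (c * |U ω|) - 1) ∂P := by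
  have hpointwise (u : ℝ) : exp (s * u) ≤ 1 + s * u + (s / c) ^ 2 * (exp (c * |u|) - 1) := by
    have hratio : |s / c| ≤ 1 := by rwa [abs_div, abs_of_pos hc, div_le_one hc]
    have htaylor := exp_mul_sub_one_sub_le hratio (c * u)
    rw [← mul_assoc, div_mul_cancel₀ s hc.ne', abs_mul, abs_of_pos hc] at htaylor
    have hdrop : 0 ≤ (s / c) ^ 2 * (c * |u|) := by positivity
    linarith
  have hlinear : Integrable (fun ω ↦ s * U ω) P :=
    (integrable_of_integrable_exp_mul_abs_sub_one hU hc hint).const_mul s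
  have haffine : Integrable (fun ω ↦ 1 + s * U ω) P := (integrable_const 1).add hlinear
  calc mgf U P s
      ≤ ∫ ω, (1 + s * U ω + (s / c) ^ 2 * (exp (c * |U ω|) - 1)) ∂P :=
        integral_mono_of_nonneg (ae_of_all _ fun ω ↦ (exp_pos _).le)
          (haffine.add (hint.const_mul _)) (ae_of_all _ fun ω ↦ hpointwise (U ω))
    _ = 1 + s * ∫ ω, U ω ∂P + (s / c) ^ 2 * ∫ ω, (exp (c * |U ω|) - 1) ∂P := by
        rw [integral_add haffine (hint.const_mul _), integral_add (integrable_const 1) hlinear,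
          integral_const_mul, integral_const_mul, integral_const, probReal_univ, one_smul]

lemma HasGeometricTail.mgf_le_one_add_mul_integral_add_sq [IsProbabilityMeasure P]
    (htail : HasGeometricTail P U a b) (hU : AEMeasurable U P) (ha : 0 ≤ a) (hb : 0 < b)
    (hs : |s| ≤ b / 2) :
    mgf U P s ≤ 1 + s * ∫ ω, U ω ∂P + 4 * a / b ^ 2 * s ^ 2 := by
  have hint := htail.integrable_exp_mul_abs_sub_one hU ha (half_pos hb).le (half_lt_self hb)
  have hbound : ∫ ω, (exp (b / 2 * |U ω|) - 1) ∂P ≤ a := by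
    refine (htail.integral_exp_mul_abs_sub_one_le hU ha (half_pos hb).le
      (half_lt_self hb)).trans_eq ?_
    rw [sub_half, mul_div_cancel_right₀ a (half_pos hb).ne']
  calc mgf U P s
      ≤ 1 + s * ∫ ω, U ω ∂P + (s / (b / 2)) ^ 2 * ∫ ω, (exp (b / 2 * |U ω|) - 1) ∂P :=
        mgf_le_one_add_mul_integral_add hU (half_pos hb) hs hint
    _ ≤ 1 + s * ∫ ω, U ω ∂P + (s / (b / 2)) ^ 2 * a := by gcongr
    _ = 1 + s * ∫ ω, U ω ∂P + 4 * a / b ^ 2 * s ^ 2 := by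
        field_simp
        ring

lemma HasGeometricTail.mgf_le_one_sub_of_drift [IsProbabilityMeasure P] {d : ℝ}
    (htail : HasGeometricTail P U a b) (hU : AEMeasurable U P) (ha : 0 < a) (hb : 0 < b)
    (hsb : |s| ≤ b / 2) (hsd : |s| ≤ d * b ^ 2 / (8 * a))
    (hdrift : s * ∫ ω, U ω ∂P ≤ -(|s| * d)) :
    mgf U P s ≤ 1 - |s| * d / 2 := by
  have hquadratic : 4 * a / b ^ 2 * s ^ 2 ≤ |s| * d / 2 :=
    calc 4 * a / b ^ 2 * s ^ 2 = 4 * a / b ^ 2 * (|s| * |s|) := by rw [abs_mul_abs_self, ← sq]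
      _ ≤ 4 * a / b ^ 2 * (|s| * (d * b ^ 2 / (8 * a))) := by gcongr
      _ = |s| * d / 2 := by
          field_simp
          ring
  linarith [htail.mgf_le_one_add_mul_integral_add_sq hU ha.le hb hsb]

end GeometricTail

lemma integral_exp_mul_eq_exp_mul_mgf_sub (μ : Measure ℝ) (θ s : ℝ) :
    ∫ x, exp (s * x) ∂μ = exp (s * θ) * mgf (fun x ↦ x - θ) μ s := by
  rw [mgf, ← integral_const_mul]
  congr with x
  rw [← exp_add, ← mul_add, add_sub_cancel]

lemma integral_exp_mul_le_of_drift {μ : Measure ℝ} [IsProbabilityMeasure μ] {a b d s θ : ℝ}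
    (htail : HasGeometricTail μ (fun x ↦ x - θ) a b) (ha : 0 < a) (hb : 0 < b)
    (hsb : |s| ≤ b / 2) (hsd : |s| ≤ d * b ^ 2 / (8 * a))
    (hdrift : s * (∫ x, x ∂μ - θ) ≤ -(|s| * d)) :
    ∫ x, exp (s * x) ∂μ ≤ exp (s * θ) * (1 - |s| * d / 2) := by
  have hmeas : AEMeasurable (fun x ↦ x - θ) μ := by fun_prop
  have hmean : ∫ x, (x - θ) ∂μ = ∫ x, x ∂μ - θ := by
    have hid : Integrable (fun x ↦ x) μ := by
      simpa [sub_eq_add_neg] using htail.integrable hmeas ha.le hb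
    rw [integral_sub hid (integrable_const θ), integral_const, probReal_univ, one_smul]
  rw [integral_exp_mul_eq_exp_mul_mgf_sub μ θ]
  gcongr
  exact htail.mgf_le_one_sub_of_drift hmeas ha hb hsb hsd (hmean ▸ hdrift)

section WithDensity

variable {α : Type*} {mα : MeasurableSpace α} {μ : Measure α} {p : α → ℝ}

lemma integral_withDensity_ofReal (hp : AEMeasurable p μ) (hp0 : 0 ≤ᵐ[μ] p) (g : α → ℝ) :
    ∫ x, g x ∂μ.withDensity (fun x ↦ ENNReal.ofReal (p x)) = ∫ x, g x * p x ∂μ := by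
  rw [integral_withDensity_eq_integral_toReal_smul₀ hp.ennreal_ofReal
    (ae_of_all _ fun x ↦ ENNReal.ofReal_lt_top)]
  refine integral_congr_ae ?_
  filter_upwards [hp0] with x hx
  rw [ENNReal.toReal_ofReal hx, smul_eq_mul, mul_comm]

lemma measureReal_withDensity_ofReal (hp : AEStronglyMeasurable p μ) (hp0 : 0 ≤ᵐ[μ] p)
    {S : Set α} (hS : MeasurableSet S) :
    (μ.withDensity fun x ↦ ENNReal.ofReal (p x)).real S = ∫ x in S, p x ∂μ := by
  rw [measureReal_def, withDensity_apply _ hS,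
    integral_eq_lintegral_of_nonneg_ae (ae_restrict_of_ae hp0) hp.restrict]

lemma isProbabilityMeasure_withDensity_ofReal (hp : Integrable p μ) (hp0 : 0 ≤ᵐ[μ] p)
    (hp1 : ∫ x, p x ∂μ = 1) :
    IsProbabilityMeasure (μ.withDensity fun x ↦ ENNReal.ofReal (p x)) := by
  refine ⟨?_⟩
  rw [withDensity_apply _ MeasurableSet.univ, setLIntegral_univ,
    ← ofReal_integral_eq_lintegral_ofReal hp hp0, hp1, ENNReal.ofReal_one]

end WithDensity

/-- The conditional posterior law of `X` given `Θ = θ`, as a measure with density `post`. Negative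
values of `post` would be truncated to `0`. -/
def condPosterior (f₁ f₂ : ℝ → ℝ) (y θ : ℝ) : Measure ℝ :=
  volume.withDensity fun x ↦ ENNReal.ofReal (post f₁ f₂ y θ x)

section Posterior

variable {f₁ f₂ : ℝ → ℝ} {y θ : ℝ}

lemma post_nonneg (hf₁ : 0 ≤ f₁) (hf₂ : 0 ≤ f₂) : 0 ≤ post f₁ f₂ y θ := by
  have hjoint (x : ℝ) : 0 ≤ fjoint f₁ f₂ y θ x := mul_nonneg (hf₁ _) (hf₂ _)
  exact fun x ↦ div_nonneg (hjoint x) (integral_nonneg hjoint)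

lemma integrable_post (hint : Integrable (fjoint f₁ f₂ y θ)) : Integrable (post f₁ f₂ y θ) :=
  hint.div_const _

lemma integral_post (hc : cnorm f₁ f₂ y θ ≠ 0) : ∫ x, post f₁ f₂ y θ x = 1 := by
  simp only [post, integral_div]
  exact div_self hc

lemma integral_condPosterior (hf₁ : 0 ≤ f₁) (hf₂ : 0 ≤ f₂)
    (hint : Integrable (fjoint f₁ f₂ y θ)) (g : ℝ → ℝ) :
    ∫ x, g x ∂condPosterior f₁ f₂ y θ = ∫ x, g x * post f₁ f₂ y θ x :=
  integral_withDensity_ofReal (integrable_post hint).aemeasurable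
    (ae_of_all _ (post_nonneg hf₁ hf₂)) g

lemma measureReal_condPosterior (hf₁ : 0 ≤ f₁) (hf₂ : 0 ≤ f₂)
    (hint : Integrable (fjoint f₁ f₂ y θ)) {S : Set ℝ} (hS : MeasurableSet S) :
    (condPosterior f₁ f₂ y θ).real S = ∫ x in S, post f₁ f₂ y θ x :=
  measureReal_withDensity_ofReal (integrable_post hint).aestronglyMeasurable
    (ae_of_all _ (post_nonneg hf₁ hf₂)) hS

lemma isProbabilityMeasure_condPosterior (hf₁ : 0 ≤ f₁) (hf₂ : 0 ≤ f₂)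
    (hint : Integrable (fjoint f₁ f₂ y θ)) (hc : cnorm f₁ f₂ y θ ≠ 0) :
    IsProbabilityMeasure (condPosterior f₁ f₂ y θ) :=
  isProbabilityMeasure_withDensity_ofReal (integrable_post hint)
    (ae_of_all _ (post_nonneg hf₁ hf₂)) (integral_post hc)

end Posterior

theorem dur_gtip_exponential_moment_bounds_general (μ : ℝ → Measure ℝ)
    [∀ θ, IsProbabilityMeasure (μ θ)] {d k : ℝ} (hd : 0 < d) (hk : 0 ≤ k)
    (hDUR : ∀ θ : ℝ, k < |θ| → |∫ x, x ∂μ θ| ≤ |θ| - d)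
    (hGTIP : ∃ a > (0 : ℝ), ∃ b > (0 : ℝ), ∀ θ : ℝ, ∀ t : ℝ, 0 ≤ t →
      (μ θ).real {x : ℝ | t < |x - θ|} ≤ a * exp (-b * t)) :
    ∃ α₀ > (0 : ℝ), ∀ α : ℝ, 0 < α → α < α₀ →
      (∀ θ : ℝ, k < θ → ∫ x, exp (α * x) ∂μ θ ≤ exp (α * θ) * (1 - α * d / 2)) ∧
      (∀ θ : ℝ, θ < -k → ∫ x, exp (-α * x) ∂μ θ ≤ exp (-α * θ) * (1 - α * d / 2)) := by
  obtain ⟨a, ha, b, hb, htail_real⟩ := hGTIP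
  have htail (θ : ℝ) : HasGeometricTail (μ θ) (fun x ↦ x - θ) a b := fun t ht ↦
    (ENNReal.le_ofReal_iff_toReal_le (measure_ne_top _ _) (by positivity)).mpr (htail_real θ t ht)
  refine ⟨min (b / 2) (d * b ^ 2 / (8 * a)), by positivity, fun α hα hα₀ ↦ ?_⟩
  obtain ⟨hαb, hαd⟩ := le_min_iff.mp hα₀.le
  have habs : |α| = α := abs_of_pos hα
  have habs_neg : |-α| = α := by rw [abs_neg, habs]
  refine ⟨fun θ hθ ↦ ?_, fun θ hθ ↦ ?_⟩
  · have hmean : ∫ x, x ∂μ θ - θ ≤ -d := by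
      have hbound := hDUR θ (lt_abs.mpr (.inl hθ))
      rw [abs_of_pos (hk.trans_lt hθ)] at hbound
      linarith [le_of_abs_le hbound]
    have hdrift : α * (∫ x, x ∂μ θ - θ) ≤ -(|α| * d) := by
      rw [habs, ← mul_neg]
      gcongr
    simpa only [habs] using integral_exp_mul_le_of_drift (htail θ) ha hb
      (habs.trans_le hαb) (habs.trans_le hαd) hdrift
  · have hmean : d ≤ ∫ x, x ∂μ θ - θ := by
      have hbound := hDUR θ (lt_abs.mpr (.inr (lt_neg_of_lt_neg hθ)))
      rw [abs_of_neg (hθ.trans_le (neg_nonpos.mpr hk))] at hbound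
      linarith [neg_le_of_abs_le hbound]
    have hdrift : -α * (∫ x, x ∂μ θ - θ) ≤ -(|-α| * d) := by
      rw [habs_neg, neg_mul]
      gcongr
    simpa only [habs_neg] using integral_exp_mul_le_of_drift (htail θ) ha hb
      (habs_neg.trans_le hαb) (habs_neg.trans_le hαd) hdrift

/-- Lemma on exponential drift of the conditional posterior: under DUR
(with constants `d, k`) and GTIP of the non-centred parametrisation, for all sufficiently
small `α > 0` the conditional posterior exponential moments satisfy the stated bounds. -/
theorem dur_gtip_exponential_moment_bounds (f₁ f₂ : ℝ → ℝ) (y : ℝ)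
    (hf₁c : Continuous f₁) (hf₂c : Continuous f₂)
    (hf₁pos : ∀ t, 0 < f₁ t) (hf₂pos : ∀ t, 0 < f₂ t)
    (hf₁bdd : ∃ M, ∀ t, f₁ t ≤ M) (hf₂bdd : ∃ M, ∀ t, f₂ t ≤ M)
    (hf₁sym : ∀ t, f₁ (-t) = f₁ t) (hf₂sym : ∀ t, f₂ (-t) = f₂ t)
    (hf₁prob : ∫ t, f₁ t = 1) (hf₂prob : ∫ t, f₂ t = 1)
    (hjint : ∀ θ, Integrable (fun x => fjoint f₁ f₂ y θ x))
    (hcpos : ∀ θ, 0 < cnorm f₁ f₂ y θ)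
    (d k : ℝ) (hd : 0 < d) (hk : 0 < k)
    (hDUR : ∀ θ : ℝ, k < |θ| → |∫ x, x * post f₁ f₂ y θ x| ≤ |θ| - d)
    (hGTIP : ∃ a > (0 : ℝ), ∃ b > (0 : ℝ), ∀ θ : ℝ, ∀ t : ℝ, 0 ≤ t →
      (∫ x in {x : ℝ | t < |x - θ|}, post f₁ f₂ y θ x) ≤ a * Real.exp (-b * t)) :
    ∃ α₀ > (0 : ℝ), ∀ α : ℝ, 0 < α → α < α₀ →
      (∀ θ : ℝ, k < θ →
        (∫ x, Real.exp (α * x) * post f₁ f₂ y θ x) ≤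
          Real.exp (α * θ) * (1 - α * d / 2)) ∧
      (∀ θ : ℝ, θ < -k →
        (∫ x, Real.exp (-α * x) * post f₁ f₂ y θ x) ≤
          Real.exp (-α * θ) * (1 - α * d / 2)) := by
  have hf₁ : 0 ≤ f₁ := fun t ↦ (hf₁pos t).le
  have hf₂ : 0 ≤ f₂ := fun t ↦ (hf₂pos t).le
  have hprob (θ : ℝ) : IsProbabilityMeasure (condPosterior f₁ f₂ y θ) :=
    isProbabilityMeasure_condPosterior hf₁ hf₂ (hjint θ) (hcpos θ).ne'
  have htail_meas (θ t : ℝ) : MeasurableSet {x : ℝ | t < |x - θ|} :=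
    measurableSet_lt (by fun_prop) (by fun_prop)
  simp only [← integral_condPosterior hf₁ hf₂ (hjint _),
    ← measureReal_condPosterior hf₁ hf₂ (hjint _) (htail_meas _ _)] at hDUR hGTIP ⊢
  exact dur_gtip_exponential_moment_bounds_general _ hd hk.le hDUR hGTIP
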